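/- arXiv:2107.06620 — 2 statements merged into one kernel-verified Lean document; each statement's English description precedes it below -/
import Mathlib

section
/- For every n ∈ ℤ one has k_ℤ(n) = (√2/π)·1/(n + 1/2) and k̃_ℤ(n) = (2√2/π)·n/(n² − 1/4). Consequently there exists C < ∞ such that |k_ℤ(n)| ≤ C(1+|n|)^{−1}, |k_ℤ(n) − k_ℤ(n+1)| ≤ C(1+|n|)^{−2}, |k̃_ℤ(n)| ≤ C(1+|n|)^{−1} and |k̃_ℤ(n) − k̃_ℤ(n+1)| ≤ C(1+|n|)^{−2} for all n ∈ ℤ. -/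
open MeasureTheory ENNReal Set Function
open scoped NNReal ENNReal Classical

noncomputable section

/-- A homogeneous tree of degree `q+1` with a distinguished end (mythical ancestor),
encoded through its graph distance `dist`, horocyclic level function `level`,
and predecessor map `pred`. -/
structure FlowTree (q : ℕ) where
  V : Type
  countableV : Countable V
  dist : V → V → ℕ
  level : V → ℤ
  pred : V → V
  dist_self : ∀ x, dist x x = 0
  eq_of_dist_eq_zero : ∀ x y, dist x y = 0 → x = y
  dist_comm : ∀ x y, dist x y = dist y x
  dist_triangle : ∀ x y z, dist x z ≤ dist x y + dist y z
  level_pred : ∀ x, level (pred x) = level x + 1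
  succ_finite : ∀ x, Set.Finite {y | pred y = x}
  succ_card : ∀ x, Nat.card {y // pred y = x} = q
  dist_le : ∀ (x y : V) (n m : ℕ), pred^[n] x = pred^[m] y → dist x y ≤ n + m
  dist_spec : ∀ x y, ∃ n m : ℕ, pred^[n] x = pred^[m] y ∧ n + m = dist x y

namespace FlowTree

variable {q : ℕ} (S : FlowTree q)

/-- The canonical flow measure weight `μ(x) = q^{ℓ(x)}`, as an extended nonnegative real. -/
def w (x : S.V) : ℝ≥0∞ := (q : ℝ≥0∞) ^ ((S.level x : ℤ) : ℝ)

/-- The canonical flow measure weight `μ(x) = q^{ℓ(x)}`, as a real number. -/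
def wR (x : S.V) : ℝ := (q : ℝ) ^ (S.level x)

/-- The canonical flow measure of a set `E ⊆ T`. -/
def muS (E : Set S.V) : ℝ≥0∞ := ∑' x : E, S.w x

/-- The `L^p(μ)` (quasi)norm, `p ∈ [1,∞]`. -/
def lpNorm (p : ℝ≥0∞) {E : Type*} [NNNorm E] (f : S.V → E) : ℝ≥0∞ :=
  if p = ∞ then ⨆ x, (‖f x‖₊ : ℝ≥0∞)
  else (∑' x, (‖f x‖₊ : ℝ≥0∞) ^ p.toReal * S.w x) ^ (1 / p.toReal)

/-- The weak `L^{1,∞}(μ)` quasinorm `sup_{λ>0} λ · μ({|f| > λ})`. -/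
def wkNorm {E : Type*} [NNNorm E] (f : S.V → E) : ℝ≥0∞ :=
  ⨆ t : ℝ≥0, (t : ℝ≥0∞) * S.muS {x | t < ‖f x‖₊}

/-- `Σf(x) = f(𝔭(x))`. -/
def sig (f : S.V → ℂ) : S.V → ℂ := fun x => f (S.pred x)

/-- `Σ*f(x) = (1/q) Σ_{y ∈ succ(x)} f(y)`. -/
def sigStar (f : S.V → ℂ) : S.V → ℂ :=
  fun x => (q : ℂ)⁻¹ * ∑' y : {y | S.pred y = x}, f y.1

/-- The flow gradient `∇ = id − Σ`. -/
def grad (f : S.V → ℂ) : S.V → ℂ := fun x => f x - f (S.pred x)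

/-- `∇* = id − Σ*`. -/
def gradStar (f : S.V → ℂ) : S.V → ℂ := fun x => f x - S.sigStar f x

/-- The modulus of the gradient `Df(x) = Σ_{y ∼ x} |f(x) − f(y)|`. -/
def Dmod (f : S.V → ℂ) : S.V → ℝ :=
  fun x => ∑' y : {y | S.dist x y = 1}, ‖f x - f y.1‖

/-- `Σ̃_n = Σ^n` for `n ≥ 0` and `(Σ*)^{−n}` for `n < 0`. -/
def sigTilde (n : ℤ) (f : S.V → ℂ) : S.V → ℂ :=
  if 0 ≤ n then (S.sig)^[n.toNat] f else (S.sigStar)^[(-n).toNat] f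

/-- `Σ*` acting on real-valued functions. -/
def sigStarR (f : S.V → ℝ) : S.V → ℝ :=
  fun x => (q : ℝ)⁻¹ * ∑' y : {y | S.pred y = x}, f y.1

/-- The flow Laplacian `𝓛 = id − (Σ + Σ*)/2`, acting pointwise on real functions. -/
def lapR (f : S.V → ℝ) : S.V → ℝ :=
  fun x => f x - (f (S.pred x) + S.sigStarR f x) / 2

/-- `δ_y/μ(y)`, the normalized delta at `y`. -/
def deltaMu (y : S.V) : S.V → ℝ := fun z => if z = y then (S.wR y)⁻¹ else 0

/-- The heat kernel `H_t(x,y)` of the flow Laplacian, i.e. `(e^{−t𝓛} (δ_y/μ(y)))(x)`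
computed via the exponential power series of the bounded operator `𝓛`. -/
def Hker (t : ℝ) (x y : S.V) : ℝ :=
  ∑' n : ℕ, ((-t) ^ n / (n.factorial : ℝ)) * ((S.lapR)^[n] (S.deltaMu y)) x

/-- The integral kernel `K(x,y)` of `𝓛^{−1/2}`, by subordination. -/
def Kker (x y : S.V) : ℝ :=
  (Real.sqrt Real.pi)⁻¹ * ∫ t in Set.Ioi (0 : ℝ), S.Hker t x y * t ^ (-(1 : ℝ)/2)

/-- The Riesz transform `𝓡 = ∇𝓛^{−1/2}`, defined on finitely supported functions. -/
def riesz (f : S.V → ℂ) : S.V → ℂ :=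
  fun x => ∑' y, ((S.Kker x y - S.Kker (S.pred x) y : ℝ) : ℂ) * f y * (S.wR y : ℂ)

/-- The integral operator with almost-radial kernel `q^{−ℓ(x)/2} G(d(x,y)) q^{−ℓ(y)/2}`. -/
def kernelOp (G : ℕ → ℂ) (f : S.V → ℂ) : S.V → ℂ :=
  fun x => ∑' y, (((q : ℝ) ^ (-((S.level x : ℤ) : ℝ)/2) * (q : ℝ) ^ (-((S.level y : ℤ) : ℝ)/2) : ℝ) : ℂ)
    * G (S.dist x y) * f y * (S.wR y : ℂ)

/-- The ε-horizontal gradient `∇_ε f(x) = (1/q) Σ_{y ∈ succ(x)} ε(y) f(y)`. -/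
def hgrad (ε f : S.V → ℂ) : S.V → ℂ :=
  fun x => (q : ℂ)⁻¹ * ∑' y : {y | S.pred y = x}, ε y.1 * f y.1

/-- The adjoint ε-horizontal gradient `∇_ε* f(x) = conj(ε(x)) f(𝔭(x))`. -/
def hgradStar (ε f : S.V → ℂ) : S.V → ℂ :=
  fun x => (starRingEnd ℂ) (ε x) * f (S.pred x)

/-- `‖ε‖_∞`. -/
def epsSup (ε : S.V → ℂ) : ℝ≥0∞ := ⨆ x, (‖ε x‖₊ : ℝ≥0∞)

/-- The `L²(μ)` inner product. -/
def inner2 (f g : S.V → ℂ) : ℂ := ∑' x, f x * (starRingEnd ℂ) (g x) * (S.wR x : ℂ)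

/-- `y ≤ x` iff `d(x,y) = ℓ(x) − ℓ(y)`. -/
def le' (y x : S.V) : Prop := (S.dist x y : ℤ) = S.level x - S.level y

/-- Admissible trapezoids of `(T,μ)`. -/
def IsAdmissibleTrapezoid (F : Set S.V) : Prop :=
  (∃ x, F = {x}) ∨
  ∃ (x₀ : S.V) (h1 h2 : ℕ), 0 < h1 ∧ 2 * h1 ≤ h2 ∧ h2 ≤ 12 * h1 ∧
    F = {x | S.le' x x₀ ∧ S.level x₀ - (h2 : ℤ) < S.level x ∧ S.level x ≤ S.level x₀ - (h1 : ℤ)}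

/-- `(1,∞)`-atoms of `(T,μ)`. -/
def IsOneInftyAtom (a : S.V → ℂ) : Prop :=
  ∃ F : Set S.V, S.IsAdmissibleTrapezoid F ∧ Function.support a ⊆ F ∧
    (∑' x, a x * (S.wR x : ℂ)) = 0 ∧ ∀ x, (‖a x‖₊ : ℝ≥0∞) ≤ (S.muS F)⁻¹

end FlowTree

namespace ZRiesz

/-- The discrete Laplacian on `ℤ`. -/
def deltaZ (F : ℤ → ℝ) : ℤ → ℝ := fun n => F n - (F (n + 1) + F (n - 1)) / 2

/-- The heat kernel `h_t^ℤ = e^{−tΔ_ℤ} δ_0` on `ℤ`, via the exponential power series. -/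
def heatZ (t : ℝ) (n : ℤ) : ℝ :=
  ∑' k : ℕ, ((-t) ^ k / (k.factorial : ℝ)) *
    (deltaZ^[k] (fun m => if m = 0 then (1 : ℝ) else 0)) n

/-- Kernel of the Riesz transform on `ℤ`: `k_ℤ(n) = π^{−1/2} ∫₀^∞ (∇_ℤ h_t^ℤ)(n) t^{−1/2} dt`. -/
def kZ (n : ℤ) : ℝ :=
  (Real.sqrt Real.pi)⁻¹ * ∫ t in Set.Ioi (0 : ℝ), (heatZ t n - heatZ t (n + 1)) * t ^ (-(1 : ℝ)/2)

/-- Kernel of the skew-symmetric part: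
`k̃_ℤ(n) = π^{−1/2} ∫₀^∞ (∇̃_ℤ h_t^ℤ)(n) t^{−1/2} dt`. -/
def ktZ (n : ℤ) : ℝ :=
  (Real.sqrt Real.pi)⁻¹ *
    ∫ t in Set.Ioi (0 : ℝ), (heatZ t (n - 1) - heatZ t (n + 1)) * t ^ (-(1 : ℝ)/2)

/-- The closed formula `k̃_ℤ(m) = (2√2/π) m/(m² − 1/4)`. -/
def ktZc (m : ℤ) : ℝ := (2 * Real.sqrt 2 / Real.pi) * (m : ℝ) / ((m : ℝ) ^ 2 - 1/4)

/-- `G(n) = Σ_{k≥0} q^{−(n+2k)/2} k̃_ℤ(n+2k+1)` (subordination kernel version). -/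
def Gint (q : ℕ) (n : ℕ) : ℝ :=
  ∑' k : ℕ, (q : ℝ) ^ (-(((n : ℝ)) + 2 * (k : ℝ))/2) * ktZ ((n : ℤ) + 2 * (k : ℤ) + 1)

/-- `G(n) = Σ_{k≥0} q^{−(n+2k)/2} k̃_ℤ(n+2k+1)` (closed formula version). -/
def Gc (q : ℕ) (n : ℕ) : ℝ :=
  ∑' k : ℕ, (q : ℝ) ^ (-(((n : ℝ)) + 2 * (k : ℝ))/2) * ktZc ((n : ℤ) + 2 * (k : ℤ) + 1)

/-- The `ℓ^p(ℤ)` norm. -/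
def zlpNorm (p : ℝ≥0∞) (F : ℤ → ℂ) : ℝ≥0∞ :=
  if p = ∞ then ⨆ n, (‖F n‖₊ : ℝ≥0∞)
  else (∑' n : ℤ, (‖F n‖₊ : ℝ≥0∞) ^ p.toReal) ^ (1 / p.toReal)

/-- The `ℓ^{1,∞}(ℕ)` quasinorm. -/
def natWk (F : ℕ → ℂ) : ℝ≥0∞ :=
  ⨆ t : ℝ≥0, (t : ℝ≥0∞) * ∑' (_ : {n : ℕ | t < ‖F n‖₊}), (1 : ℝ≥0∞)

end ZRiesz

/-- The punctured boundary `Ω = ∂T \ {ω_*}` of the tree, together with the measure `ν`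
with `ν(Ω_x) = q^{ℓ(x)}`.  `vert ω n` is the vertex `ω_n` of level `n` on the geodesic
`[ω, ω_*]`. -/
structure FlowTreeBoundary {q : ℕ} (S : FlowTree q) where
  Ω : Type
  mΩ : MeasurableSpace Ω
  ν : @MeasureTheory.Measure Ω mΩ
  vert : Ω → ℤ → S.V
  level_vert : ∀ ω n, S.level (vert ω n) = n
  pred_vert : ∀ ω n, S.pred (vert ω n) = vert ω (n + 1)
  vert_surj : ∀ x : S.V, ∃ ω, vert ω (S.level x) = x
  vert_inj : ∀ ω ω', (∀ n, vert ω n = vert ω' n) → ω = ω'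
  meas_cone : ∀ x : S.V, @MeasurableSet Ω mΩ {ω | vert ω (S.level x) = x}
  nu_cone : ∀ x : S.V, ν {ω | vert ω (S.level x) = x} = (q : ℝ≥0∞) ^ ((S.level x : ℤ) : ℝ)

attribute [instance] FlowTreeBoundary.mΩ

namespace FlowTreeBoundary

variable {q : ℕ} {S : FlowTree q} (B : FlowTreeBoundary S)

/-- The product measure `ν × #` on `Ω × ℤ`. -/
def pm : MeasureTheory.Measure (B.Ω × ℤ) := B.ν.prod MeasureTheory.Measure.count

/-- `Ω_x = {ω : x ∈ [ω, ω_*]}`. -/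
def cone (x : S.V) : Set B.Ω := {ω | B.vert ω (S.level x) = x}

/-- The lifting operator `Φf(ω,n) = f(ω_n)`. -/
def lift (f : S.V → ℂ) : B.Ω × ℤ → ℂ := fun p => f (B.vert p.1 p.2)

/-- The lifting operator on `ℝ≥0∞`-valued functions. -/
def liftNN (f : S.V → ℝ≥0∞) : B.Ω × ℤ → ℝ≥0∞ := fun p => f (B.vert p.1 p.2)

/-- The adjoint `Φ*g(x) = ν(Ω_x)^{−1} ∫_{Ω_x} g(ω, ℓ(x)) dν(ω)`. -/
def liftStar (g : B.Ω × ℤ → ℂ) : S.V → ℂ :=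
  fun x => ((B.ν (B.cone x)).toReal)⁻¹ * ∫ ω in B.cone x, g (ω, S.level x) ∂B.ν

/-- The adjoint `Φ*` on `ℝ≥0∞`-valued functions. -/
def liftStarNN (g : B.Ω × ℤ → ℝ≥0∞) : S.V → ℝ≥0∞ :=
  fun x => (B.ν (B.cone x))⁻¹ * ∫⁻ ω in B.cone x, g (ω, S.level x) ∂B.ν

end FlowTreeBoundary

/-- The weak `L^{1,∞}(μ)` quasinorm with respect to a measure. -/
def wkMeas {α : Type*} [MeasurableSpace α] (μ : MeasureTheory.Measure α) (g : α → ℂ) : ℝ≥0∞ :=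
  ⨆ t : ℝ≥0, (t : ℝ≥0∞) * μ {a | t < ‖g a‖₊}

/-- The weak `L^{1,∞}(μ)` quasinorm for `ℝ≥0∞`-valued functions. -/
def wkMeasNN {α : Type*} [MeasurableSpace α] (μ : MeasureTheory.Measure α) (g : α → ℝ≥0∞) :
    ℝ≥0∞ :=
  ⨆ t : ℝ≥0, (t : ℝ≥0∞) * μ {a | (t : ℝ≥0∞) < g a}

end
namespace ZRiesz

theorem integral_cos_int_mul (n : ℤ) :
    ∫ θ in (0 : ℝ)..Real.pi, Real.cos (n * θ) = if n = 0 then Real.pi else 0 := by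
  split_ifs with h
  · simp [h]
  · have hn : (n : ℝ) ≠ 0 := by exact_mod_cast h
    rw [intervalIntegral.integral_comp_mul_left (fun x => Real.cos x) hn]
    simp [Real.sin_int_mul_pi]

theorem deltaZ_iterate_eq_integral (k : ℕ) (n : ℤ) :
    (deltaZ^[k] (fun m => if m = 0 then (1 : ℝ) else 0)) n =
      Real.pi⁻¹ * ∫ θ in (0 : ℝ)..Real.pi, (1 - Real.cos θ) ^ k * Real.cos (n * θ) := by
  induction k generalizing n with
  | zero =>
    simp only [iterate_zero, id_eq, pow_zero, one_mul, integral_cos_int_mul]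
    split_ifs <;> simp [Real.pi_ne_zero]
  | succ k ih =>
    have hi (m : ℤ) : IntervalIntegrable
        (fun θ : ℝ => (1 - Real.cos θ) ^ k * Real.cos (m * θ)) volume 0 Real.pi :=
      Continuous.intervalIntegrable (by fun_prop) _ _
    rw [iterate_succ_apply', deltaZ, ih, ih, ih, ← mul_add,
      ← intervalIntegral.integral_add (hi _) (hi _), mul_div_assoc, ← mul_sub,
      ← intervalIntegral.integral_div, ← intervalIntegral.integral_sub (hi _)
        (((hi _).add (hi _)).div_const 2)]
    congr 1
    refine intervalIntegral.integral_congr fun θ _ => ?_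
    have h1 : Real.cos (((n + 1 : ℤ) : ℝ) * θ) + Real.cos (((n - 1 : ℤ) : ℝ) * θ)
        = 2 * Real.cos θ * Real.cos (n * θ) := by
      push_cast
      rw [add_mul, sub_mul, one_mul, Real.cos_add, Real.cos_sub]
      ring
    simp only [← mul_add, h1]
    ring

/-- Fourier representation of the heat kernel on `ℤ`. -/
theorem heatZ_eq_integral (t : ℝ) (n : ℤ) :
    heatZ t n = Real.pi⁻¹ *
      ∫ θ in (0 : ℝ)..Real.pi, Real.exp (-(1 - Real.cos θ) * t) * Real.cos (n * θ) := by
  have key : HasSum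
      (fun k : ℕ => ∫ θ in (0 : ℝ)..Real.pi,
        (-t) ^ k / (k.factorial : ℝ) * ((1 - Real.cos θ) ^ k * Real.cos (n * θ)))
      (∫ θ in (0 : ℝ)..Real.pi, Real.exp (-(1 - Real.cos θ) * t) * Real.cos (n * θ)) := by
    refine intervalIntegral.hasSum_integral_of_dominated_convergence
      (fun k _ => (|t| * 2) ^ k / (k.factorial : ℝ)) (fun k => ?_) (fun k => ?_) ?_ ?_ ?_
    · exact Continuous.aestronglyMeasurable (by fun_prop)
    · refine .of_forall fun θ _ => ?_
      have h1 : |1 - Real.cos θ| ≤ 2 := by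
        rw [abs_le]
        constructor <;> linarith [Real.cos_le_one θ, Real.neg_one_le_cos θ]
      have h2 : |1 - Real.cos θ| ^ k * |Real.cos (n * θ)| ≤ 2 ^ k * 1 := by
        gcongr
        exact Real.abs_cos_le_one _
      rw [Real.norm_eq_abs, abs_mul, abs_mul, abs_div, abs_pow, abs_pow, abs_neg, Nat.abs_cast,
        mul_pow, mul_div_right_comm]
      gcongr
      simpa using h2
    · exact .of_forall fun θ _ => Real.summable_pow_div_factorial _
    · exact _root_.intervalIntegrable_const
    · refine .of_forall fun θ _ => ?_
      have h := NormedSpace.expSeries_div_hasSum_exp (-(1 - Real.cos θ) * t)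
      rw [← Real.exp_eq_exp_ℝ] at h
      refine (h.mul_right (Real.cos (n * θ))).congr_fun fun k => ?_
      rw [show -(1 - Real.cos θ) * t = (-t) * (1 - Real.cos θ) by ring, mul_pow]
      ring
  rw [heatZ, ← key.tsum_eq, ← tsum_mul_left]
  refine tsum_congr fun k => ?_
  rw [deltaZ_iterate_eq_integral, intervalIntegral.integral_const_mul]
  ring

theorem heatZ_sub_eq_integral (t : ℝ) (n : ℤ) :
    heatZ t n - heatZ t (n + 1) = Real.pi⁻¹ * ∫ θ in (0 : ℝ)..Real.pi,
      Real.exp (-(1 - Real.cos θ) * t) *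
        (2 * Real.sin ((n + 1 / 2) * θ) * Real.sin (θ / 2)) := by
  have hi (m : ℤ) : IntervalIntegrable
      (fun θ : ℝ => Real.exp (-(1 - Real.cos θ) * t) * Real.cos (m * θ)) volume 0 Real.pi :=
    Continuous.intervalIntegrable (by fun_prop) _ _
  rw [heatZ_eq_integral, heatZ_eq_integral, ← mul_sub,
    ← intervalIntegral.integral_sub (hi _) (hi _)]
  congr 1
  refine intervalIntegral.integral_congr fun θ _ => ?_
  have h : Real.cos (n * θ) - Real.cos (((n + 1 : ℤ) : ℝ) * θ)
      = 2 * Real.sin ((n + 1 / 2) * θ) * Real.sin (θ / 2) := by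
    rw [Real.cos_sub_cos]
    push_cast
    rw [show (n * θ - (n + 1) * θ) / 2 = -(θ / 2) by ring,
      show (n * θ + (n + 1) * θ) / 2 = (n + 1 / 2) * θ by ring, Real.sin_neg]
    ring
  simp only [← mul_sub, h]

theorem integral_exp_mul_rpow_neg_half {r : ℝ} (hr : 0 < r) :
    ∫ t in Ioi (0 : ℝ), Real.exp (-r * t) * t ^ (-(1 : ℝ) / 2) = √Real.pi / √r := by
  have h := Real.integral_rpow_mul_exp_neg_mul_Ioi (a := 1 / 2) (by norm_num) hr
  rw [Real.Gamma_one_half_eq, ← Real.sqrt_eq_rpow, Real.sqrt_div' _ hr.le,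
    Real.sqrt_one, one_div_mul_eq_div] at h
  rw [← h]
  congr 1
  ext t
  rw [mul_comm]
  norm_num

theorem integrableOn_exp_mul_rpow_neg_half {r : ℝ} (hr : 0 < r) :
    IntegrableOn (fun t => Real.exp (-r * t) * t ^ (-(1 : ℝ) / 2)) (Ioi 0) := by
  refine Integrable.of_integral_ne_zero ?_
  rw [integral_exp_mul_rpow_neg_half hr]
  have := Real.pi_pos
  positivity

/-- The integrand of the double integral defining `kZ n`. -/
noncomputable def doubleIntegrand (n : ℤ) (p : ℝ × ℝ) : ℝ :=
  Real.exp (-(1 - Real.cos p.1) * p.2) * p.2 ^ (-(1 : ℝ) / 2) *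
    (2 * Real.sin ((n + 1 / 2) * p.1) * Real.sin (p.1 / 2))

theorem one_sub_cos_eq (θ : ℝ) : 1 - Real.cos θ = 2 * Real.sin (θ / 2) ^ 2 := by
  rw [Real.sin_sq_eq_half_sub, mul_div_cancel₀ θ two_ne_zero]
  ring

theorem sin_half_pos {θ : ℝ} (hθ : θ ∈ Ioc 0 Real.pi) : 0 < Real.sin (θ / 2) :=
  Real.sin_pos_of_pos_of_lt_pi (by linarith [hθ.1]) (by linarith [hθ.1, hθ.2])

theorem integral_exp_mul_sin_half {θ : ℝ} (hθ : θ ∈ Ioc 0 Real.pi) :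
    (∫ t in Ioi (0 : ℝ), Real.exp (-(1 - Real.cos θ) * t) * t ^ (-(1 : ℝ) / 2)) *
      Real.sin (θ / 2) = √Real.pi / √2 := by
  have hs := sin_half_pos hθ
  rw [one_sub_cos_eq, integral_exp_mul_rpow_neg_half (by positivity),
    Real.sqrt_mul zero_le_two, Real.sqrt_sq hs.le]
  field_simp

theorem integrable_doubleIntegrand (n : ℤ) :
    Integrable (doubleIntegrand n)
      ((volume.restrict (Ioc 0 Real.pi)).prod (volume.restrict (Ioi (0 : ℝ)))) := by
  have hm : Measurable (doubleIntegrand n) := by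
    unfold doubleIntegrand
    fun_prop
  rw [integrable_prod_iff hm.aestronglyMeasurable]
  constructor
  · filter_upwards [ae_restrict_mem measurableSet_Ioc] with θ hθ
    have hs := sin_half_pos hθ
    have hr : 0 < 1 - Real.cos θ := by
      rw [one_sub_cos_eq]
      positivity
    exact (integrableOn_exp_mul_rpow_neg_half hr).mul_const
      (2 * Real.sin ((n + 1 / 2) * θ) * Real.sin (θ / 2))
  · have hc : Integrable (fun θ : ℝ => 2 * (√Real.pi / √2) * |Real.sin ((n + 1 / 2) * θ)|)
        (volume.restrict (Ioc 0 Real.pi)) :=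
      (Continuous.integrableOn_Icc (by fun_prop)).mono_set Ioc_subset_Icc_self
    refine hc.congr ?_
    filter_upwards [ae_restrict_mem measurableSet_Ioc] with θ hθ
    have hs := sin_half_pos hθ
    rw [← integral_exp_mul_sin_half hθ]
    calc _ = (∫ t in Ioi (0 : ℝ), Real.exp (-(1 - Real.cos θ) * t) * t ^ (-(1 : ℝ) / 2)) *
            (2 * |Real.sin ((n + 1 / 2) * θ)| * Real.sin (θ / 2)) := by ring
      _ = _ := by
        rw [← integral_mul_const]
        refine setIntegral_congr_fun measurableSet_Ioi fun t ht => ?_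
        have ht' : 0 < t := ht
        simp only [doubleIntegrand, Real.norm_eq_abs, abs_mul, abs_two, abs_of_pos hs,
          Real.abs_exp, abs_of_pos (Real.rpow_pos_of_pos ht' _)]

theorem heatZ_sub_mul_eq_integral (n : ℤ) (t : ℝ) :
    (heatZ t n - heatZ t (n + 1)) * t ^ (-(1 : ℝ) / 2) =
      Real.pi⁻¹ * ∫ θ in Ioc 0 Real.pi, doubleIntegrand n (θ, t) := by
  rw [heatZ_sub_eq_integral, mul_assoc, ← intervalIntegral.integral_mul_const,
    intervalIntegral.integral_of_le Real.pi_pos.le]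
  congr 2
  ext θ
  simp only [doubleIntegrand]
  ring

theorem integrableOn_heatZ_sub (n : ℤ) :
    IntegrableOn (fun t => (heatZ t n - heatZ t (n + 1)) * t ^ (-(1 : ℝ) / 2)) (Ioi 0) := by
  simp only [heatZ_sub_mul_eq_integral]
  exact (integrable_doubleIntegrand n).integral_prod_right.const_mul _

theorem int_add_half_ne_zero (n : ℤ) : (n : ℝ) + 1 / 2 ≠ 0 := by
  intro h
  have h' : ((2 * n + 1 : ℤ) : ℝ) = 0 := by
    push_cast
    linarith
  have : 2 * n + 1 = 0 := by exact_mod_cast h'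
  omega

theorem integral_sin_add_half_mul (n : ℤ) :
    ∫ θ in (0 : ℝ)..Real.pi, Real.sin ((n + 1 / 2) * θ) = ((n : ℝ) + 1 / 2)⁻¹ := by
  rw [intervalIntegral.integral_comp_mul_left (fun x => Real.sin x) (int_add_half_ne_zero n),
    integral_sin, show ((n : ℝ) + 1 / 2) * Real.pi = n * Real.pi + Real.pi / 2 by ring,
    Real.cos_add_pi_div_two, Real.sin_int_mul_pi]
  simp

/-- Closed formula for the kernel of the Riesz transform on `ℤ`. -/
theorem kZ_eq (n : ℤ) : kZ n = √2 / Real.pi * ((n : ℝ) + 1 / 2)⁻¹ := by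
  have hπ := Real.pi_pos
  have hF : ∫ θ in Ioc 0 Real.pi, ∫ t in Ioi (0 : ℝ), doubleIntegrand n (θ, t) =
      2 * (√Real.pi / √2) * ((n : ℝ) + 1 / 2)⁻¹ := by
    rw [← integral_sin_add_half_mul, intervalIntegral.integral_of_le hπ.le,
      ← integral_const_mul]
    refine setIntegral_congr_fun measurableSet_Ioc fun θ hθ => ?_
    simp only [doubleIntegrand]
    rw [integral_mul_const, ← integral_exp_mul_sin_half hθ]
    ring
  simp only [kZ, heatZ_sub_mul_eq_integral]
  rw [integral_const_mul, ← integral_integral_swap (f := fun θ t => doubleIntegrand n (θ, t))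
      (integrable_doubleIntegrand n), hF]
  have : √2 ≠ 0 := by positivity
  have : √Real.pi ≠ 0 := by positivity
  field_simp
  rw [Real.sq_sqrt zero_le_two]

theorem ktZ_eq_add (n : ℤ) : ktZ n = kZ (n - 1) + kZ n := by
  have h := integrableOn_heatZ_sub (n - 1)
  simp only [sub_add_cancel] at h
  rw [ktZ, kZ, kZ, ← mul_add, sub_add_cancel, ← integral_add h (integrableOn_heatZ_sub n)]
  congr 2
  ext t
  ring

theorem one_add_abs_le (n : ℤ) : 1 + |(n : ℝ)| ≤ 4 * |(n : ℝ) + 1 / 2| := by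
  rcases le_or_gt 0 n with h | h
  · have h' : (0 : ℝ) ≤ n := by exact_mod_cast h
    rw [abs_of_nonneg h', abs_of_nonneg (by linarith)]
    linarith
  · have h' : (n : ℝ) ≤ -1 := by exact_mod_cast Int.le_sub_one_of_lt h
    rw [abs_of_nonpos (by linarith), abs_of_nonpos (by linarith)]
    linarith

theorem one_add_abs_le_shift (n : ℤ) : 1 + |(n : ℝ)| ≤ 2 * (1 + |((n + 1 : ℤ) : ℝ)|) := by
  have h : |(n : ℝ)| ≤ |((n + 1 : ℤ) : ℝ)| + 1 := by
    push_cast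
    calc |(n : ℝ)| = |((n : ℝ) + 1) - 1| := by ring_nf
      _ ≤ |(n : ℝ) + 1| + |(1 : ℝ)| := abs_sub _ _
      _ = _ := by simp
  linarith [abs_nonneg ((n + 1 : ℤ) : ℝ)]

theorem one_add_abs_shift_le (n : ℤ) : 1 + |((n + 1 : ℤ) : ℝ)| ≤ 2 * (1 + |(n : ℝ)|) := by
  have h : |((n + 1 : ℤ) : ℝ)| ≤ |(n : ℝ)| + 1 := by
    push_cast
    simpa using abs_add_le (n : ℝ) 1
  linarith [abs_nonneg (n : ℝ)]

theorem sqrt_two_div_pi_le_one : √2 / Real.pi ≤ 1 := by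
  rw [div_le_one Real.pi_pos]
  calc √2 ≤ 2 := Real.sqrt_le_iff.mpr (by norm_num)
    _ ≤ Real.pi := Real.two_le_pi

theorem abs_kZ_le (n : ℤ) : |kZ n| ≤ 4 * (1 + |(n : ℝ)|)⁻¹ := by
  have hπ := Real.pi_pos
  rw [kZ_eq, abs_mul, abs_of_pos (by positivity), abs_inv]
  calc √2 / Real.pi * |(n : ℝ) + 1 / 2|⁻¹
      ≤ 1 * ((1 + |(n : ℝ)|) / 4)⁻¹ := by
        gcongr
        · exact sqrt_two_div_pi_le_one
        · linarith [one_add_abs_le n]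
    _ = 4 * (1 + |(n : ℝ)|)⁻¹ := by rw [inv_div]; ring

theorem abs_kZ_sub_le (n : ℤ) : |kZ n - kZ (n + 1)| ≤ 32 * ((1 + |(n : ℝ)|) ^ 2)⁻¹ := by
  have hπ := Real.pi_pos
  have h1 := int_add_half_ne_zero n
  have h2 := int_add_half_ne_zero (n + 1)
  have h : kZ n - kZ (n + 1) =
      √2 / Real.pi * (((n : ℝ) + 1 / 2) * (((n + 1 : ℤ) : ℝ) + 1 / 2))⁻¹ := by
    rw [kZ_eq, kZ_eq, ← mul_sub, inv_sub_inv h1 h2, div_eq_mul_inv]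
    push_cast
    ring
  rw [h, abs_mul, abs_of_pos (by positivity), abs_inv, abs_mul]
  calc √2 / Real.pi * (|(n : ℝ) + 1 / 2| * |((n + 1 : ℤ) : ℝ) + 1 / 2|)⁻¹
      ≤ 1 * (((1 + |(n : ℝ)|) / 4) * ((1 + |(n : ℝ)|) / 8))⁻¹ := by
        gcongr
        · exact sqrt_two_div_pi_le_one
        · linarith [one_add_abs_le n]
        · linarith [one_add_abs_le (n + 1), one_add_abs_le_shift n]
    _ = 32 * ((1 + |(n : ℝ)|) ^ 2)⁻¹ := by field_simp; norm_num

end ZRiesz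

open ZRiesz in
/-- explicit formulas for the convolution kernels `k_ℤ` and `k̃_ℤ` of the Riesz
transform on `ℤ` and of its skew-symmetric part, and the resulting Calderón–Zygmund
estimates. -/
theorem rieszZ_kernel_formulas :
    (∀ n : ℤ, kZ n = Real.sqrt 2 / Real.pi * ((n : ℝ) + 1/2)⁻¹) ∧
    (∀ n : ℤ, ktZ n = 2 * Real.sqrt 2 / Real.pi * (n : ℝ) / ((n : ℝ) ^ 2 - 1/4)) ∧
    ∃ C : ℝ, 0 < C ∧ ∀ n : ℤ,
      |kZ n| ≤ C * (1 + |(n : ℝ)|)⁻¹ ∧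
      |kZ n - kZ (n + 1)| ≤ C * ((1 + |(n : ℝ)|) ^ 2)⁻¹ ∧
      |ktZ n| ≤ C * (1 + |(n : ℝ)|)⁻¹ ∧
      |ktZ n - ktZ (n + 1)| ≤ C * ((1 + |(n : ℝ)|) ^ 2)⁻¹ := by
  refine ⟨kZ_eq, fun n => ?_, 160, by norm_num, fun n => ?_⟩
  · have h1 := int_add_half_ne_zero n
    have h2 := int_add_half_ne_zero (n - 1)
    have h3 : (n : ℝ) ^ 2 - 1 / 4 = (((n - 1 : ℤ) : ℝ) + 1 / 2) * ((n : ℝ) + 1 / 2) := by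
      push_cast
      ring
    rw [ktZ_eq_add, kZ_eq, kZ_eq, h3, ← mul_add, inv_add_inv h2 h1]
    push_cast
    ring
  · have hpos : (0 : ℝ) < 1 + |(n : ℝ)| := by positivity
    have hi : 0 ≤ (1 + |(n : ℝ)|)⁻¹ := by positivity
    have hi2 : 0 ≤ ((1 + |(n : ℝ)|) ^ 2)⁻¹ := by positivity
    have hs := one_add_abs_shift_le (n - 1)
    rw [sub_add_cancel] at hs
    have e1 : (1 + |((n - 1 : ℤ) : ℝ)|)⁻¹ ≤ 2 * (1 + |(n : ℝ)|)⁻¹ := by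
      calc (1 + |((n - 1 : ℤ) : ℝ)|)⁻¹ ≤ ((1 + |(n : ℝ)|) / 2)⁻¹ := by
            gcongr
            linarith
        _ = 2 * (1 + |(n : ℝ)|)⁻¹ := by rw [inv_div]; ring
    have e2 : ((1 + |((n - 1 : ℤ) : ℝ)|) ^ 2)⁻¹ ≤ 4 * ((1 + |(n : ℝ)|) ^ 2)⁻¹ := by
      rw [← inv_pow, ← inv_pow]
      calc ((1 + |((n - 1 : ℤ) : ℝ)|)⁻¹) ^ 2 ≤ (2 * (1 + |(n : ℝ)|)⁻¹) ^ 2 := by gcongr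
        _ = _ := by ring
    have k1 := abs_kZ_le n
    have k2 := abs_kZ_le (n - 1)
    have d1 := abs_kZ_sub_le n
    have d2 := abs_kZ_sub_le (n - 1)
    rw [sub_add_cancel] at d2
    refine ⟨by linarith, by linarith, ?_, ?_⟩
    · rw [ktZ_eq_add]
      linarith [abs_add_le (kZ (n - 1)) (kZ n)]
    · rw [ktZ_eq_add, ktZ_eq_add, add_sub_cancel_right,
        show kZ (n - 1) + kZ n - (kZ n + kZ (n + 1)) =
          (kZ (n - 1) - kZ n) + (kZ n - kZ (n + 1)) by ring]
      linarith [abs_add_le (kZ (n - 1) - kZ n) (kZ n - kZ (n + 1))]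
end

section
/- Let p ∈ [1,∞] and let k ∈ Cv^p(ℤ) be an ℓ^p-convolutor of ℤ. Then the operator 𝒦f = Σ_{n∈ℤ} k(n) Σ̃_{−n} f, which for each finitely supported f : T → ℂ and each vertex x is a sum with only finitely many nonzero terms, satisfies ‖𝒦f‖_{L^p(μ)} ≤ ‖k‖_{Cv^p} · ‖f‖_{L^p(μ)} for all finitely supported f; hence 𝒦 extends to a bounded operator on L^p(μ) with norm at most ‖k‖_{Cv^p}. -/
open MeasureTheory ENNReal Set Function
open scoped NNReal ENNReal Classical

namespace FlowTree

variable {q : ℕ} (S : FlowTree q)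

/-- The descendants of `x` exactly `j` generations below it. -/
noncomputable def desc : ℕ → S.V → Finset S.V
  | 0, x => {x}
  | j + 1, x => (S.succ_finite x).toFinset.biUnion (desc j)

lemma mem_desc {j : ℕ} {x v : S.V} : v ∈ S.desc j x ↔ S.pred^[j] v = x := by
  induction j generalizing x with
  | zero => simp [desc]
  | succ j ih => simp [desc, ih, Function.iterate_succ_apply']

lemma sum_desc_succ {M : Type*} [AddCommMonoid M] (j : ℕ) (x : S.V) (g : S.V → M) :
    ∑ v ∈ S.desc (j + 1) x, g v =
      ∑ y ∈ (S.succ_finite x).toFinset, ∑ v ∈ S.desc j y, g v := by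
  rw [desc, Finset.sum_biUnion]
  intro y _ z _ hyz
  refine Finset.disjoint_left.2 fun v hv hv' => hyz ?_
  rw [← S.mem_desc.1 hv, S.mem_desc.1 hv']

lemma card_succ (x : S.V) : (S.succ_finite x).toFinset.card = q := by
  rw [← Set.ncard_eq_toFinset_card _ (S.succ_finite x)]
  exact S.succ_card x

lemma card_desc (j : ℕ) (x : S.V) : (S.desc j x).card = q ^ j := by
  induction j generalizing x with
  | zero => simp [desc]
  | succ j ih =>
    rw [Finset.card_eq_sum_ones, sum_desc_succ]
    simp only [ih, Finset.sum_const, card_succ, smul_eq_mul]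
    ring

lemma level_iterate_pred (j : ℕ) (v : S.V) : S.level (S.pred^[j] v) = S.level v + j := by
  induction j with
  | zero => simp
  | succ j ih => rw [Function.iterate_succ_apply', S.level_pred, ih]; push_cast; ring

lemma level_of_mem_desc {j : ℕ} {x v : S.V} (h : v ∈ S.desc j x) :
    S.level v = S.level x - j := by
  rw [← S.mem_desc.1 h, level_iterate_pred]; ring

lemma sigStar_eq_sum (f : S.V → ℂ) (x : S.V) :
    S.sigStar f x = (q : ℂ)⁻¹ * ∑ y ∈ (S.succ_finite x).toFinset, f y := by
  rw [sigStar, tsum_subtype {y | S.pred y = x} f, tsum_eq_sum (s := (S.succ_finite x).toFinset)]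
  · congr 1
    refine Finset.sum_congr rfl fun y hy => ?_
    exact Set.indicator_of_mem ((S.succ_finite x).mem_toFinset.1 hy) f
  · intro y hy
    exact Set.indicator_of_notMem (fun h => hy ((S.succ_finite x).mem_toFinset.2 h)) f

lemma iterate_sigStar_eq_sum (j : ℕ) (f : S.V → ℂ) (x : S.V) :
    S.sigStar^[j] f x = ((q : ℂ) ^ j)⁻¹ * ∑ v ∈ S.desc j x, f v := by
  induction j generalizing x with
  | zero => simp [desc]
  | succ j ih =>
    rw [Function.iterate_succ_apply', sigStar_eq_sum, sum_desc_succ]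
    simp only [ih, ← Finset.mul_sum]
    rw [← mul_assoc, ← mul_inv, pow_succ']

lemma iterate_sig (j : ℕ) (f : S.V → ℂ) (x : S.V) : S.sig^[j] f x = f (S.pred^[j] x) := by
  induction j generalizing x with
  | zero => rfl
  | succ j ih => rw [Function.iterate_succ_apply', sig, ih, Function.iterate_succ_apply]

lemma leftInverse_sigStar_sig (hq : q ≠ 0) : Function.LeftInverse S.sigStar S.sig := by
  intro f
  funext x
  rw [sigStar_eq_sum, Finset.sum_congr rfl (g := fun _ => f x), Finset.sum_const, card_succ,
    nsmul_eq_mul, inv_mul_cancel_left₀ (Nat.cast_ne_zero.2 hq)]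
  intro y hy
  simp only [Set.Finite.mem_toFinset, Set.mem_ofPred_eq] at hy
  rw [sig, hy]

/-- The values of `f` along the ray of ancestors of `v`, extended by zero to `ℤ`. -/
def ray (f : S.V → ℂ) (v : S.V) (n : ℤ) : ℂ := if 0 ≤ n then f (S.pred^[n.toNat] v) else 0

lemma ray_natCast (f : S.V → ℂ) (v : S.V) (n : ℕ) : S.ray f v n = f (S.pred^[n] v) := by
  simp [ray]

lemma finite_support_ray {f : S.V → ℂ} (hf : (Function.support f).Finite) (v : S.V) :
    (Function.support (S.ray f v)).Finite := by
  refine (hf.image fun x => S.level x - S.level v).subset fun n hn => ?_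
  rw [Function.mem_support, ray] at hn
  split_ifs at hn with h
  · exact ⟨_, hn, by simp [level_iterate_pred, h]⟩
  · exact absurd rfl hn

lemma sigTilde_neg_eq_average_ray (hq : q ≠ 0) {f : S.V → ℂ} {a : ℤ}
    (ha : ∀ x, f x ≠ 0 → a ≤ S.level x) {x : S.V} {j : ℕ} (hx : S.level x = a + j) (n : ℤ) :
    S.sigTilde (-n) f x = ((q : ℂ) ^ j)⁻¹ * ∑ v ∈ S.desc j x, S.ray f v (j - n) := by
  by_cases h : 0 ≤ (j : ℤ) - n
  · obtain ⟨i, hi⟩ := Int.eq_ofNat_of_zero_le h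
    rw [hi]
    simp only [ray_natCast]
    simp only [← iterate_sig]
    rw [← iterate_sigStar_eq_sum]
    have inv := S.leftInverse_sigStar_sig hq
    rw [sigTilde]
    split_ifs with hn
    · obtain rfl : i = j + (-n).toNat := by omega
      rw [Function.iterate_add_apply S.sig, inv.iterate j]
    · obtain rfl : j = n.toNat + i := by omega
      rw [Function.iterate_add_apply S.sigStar, inv.iterate i, neg_neg]
  · rw [sigTilde, if_neg (by omega), neg_neg, iterate_sigStar_eq_sum,
      Finset.sum_eq_zero, Finset.sum_eq_zero, mul_zero, mul_zero]
    · intro v _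
      rw [ray, if_neg h]
    · intro v hv
      by_contra hv0
      have h1 := ha v hv0
      have h2 := S.level_of_mem_desc hv
      omega

/-- On a vertex at least as high as the support of `f`, the operator `𝒦` is an average of
convolutions along rays. -/
lemma tsum_sigTilde_eq_average_convolution (hq : q ≠ 0) (k : ℤ → ℂ) {f : S.V → ℂ}
    (hf : (Function.support f).Finite) {a : ℤ} (ha : ∀ x, f x ≠ 0 → a ≤ S.level x)
    {x : S.V} {j : ℕ} (hx : S.level x = a + j) :
    ∑' n : ℤ, k n * S.sigTilde (-n) f x =
      ((q : ℂ) ^ j)⁻¹ * ∑ v ∈ S.desc j x, ∑' m : ℤ, S.ray f v m * k (j - m) := by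
  have hsub (v : S.V) : ∑' m : ℤ, S.ray f v m * k (j - m)
      = ∑' n : ℤ, k n * S.ray f v (j - n) := by
    rw [← (Equiv.subLeft (j : ℤ)).tsum_eq]
    simp [mul_comm]
  have hsum (v : S.V) : Summable fun n : ℤ => k n * S.ray f v (j - n) := by
    refine summable_of_hasFiniteSupport
      (((S.finite_support_ray hf v).image fun m => (j : ℤ) - m).subset fun n hn => ?_)
    exact ⟨j - n, right_ne_zero_of_mul hn, by ring⟩
  simp only [hsub]
  rw [← Summable.tsum_finsetSum fun v _ => hsum v, ← tsum_mul_left]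
  refine tsum_congr fun n => ?_
  rw [S.sigTilde_neg_eq_average_ray hq ha hx, ← Finset.mul_sum]
  ring

lemma w_eq_mul_pow (hq : q ≠ 0) {x : S.V} {a : ℤ} {j : ℕ} (hx : S.level x = a + j) :
    S.w x = (q : ℝ≥0∞) ^ (a : ℝ) * (q : ℝ≥0∞) ^ j := by
  rw [w, hx, Int.cast_add, Int.cast_natCast,
    ENNReal.rpow_add _ _ (by exact_mod_cast hq) (ENNReal.natCast_ne_top q), ENNReal.rpow_natCast]

/-- Summing over all rays issued from level `a` amounts to summing over the vertices above that
level, each vertex being counted with its descendants at level `a`. -/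
lemma tsum_ray_eq_tsum_desc (a : ℤ) (φ : ℕ → S.V → ℝ≥0∞) :
    ∑' v, (if S.level v = a then ∑' j, φ j v else 0) =
      ∑' x, if a ≤ S.level x then
        ∑ v ∈ S.desc (S.level x - a).toNat x, φ (S.level x - a).toNat v else 0 := by
  calc ∑' v, (if S.level v = a then ∑' j, φ j v else 0)
      = ∑' v, ∑' j, ∑' x, if x = S.pred^[j] v then (if S.level v = a then φ j v else 0) else 0 := by
        refine tsum_congr fun v => ?_
        simp only [tsum_ite_eq]
        split_ifs <;> simp
    _ = ∑' x, ∑' j, ∑' v, if x = S.pred^[j] v then (if S.level v = a then φ j v else 0) else 0 := by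
        rw [ENNReal.tsum_comm]
        conv_rhs => rw [ENNReal.tsum_comm]
        exact tsum_congr fun j => ENNReal.tsum_comm
    _ = _ := by
        refine tsum_congr fun x => ?_
        have hlevel (j : ℕ) (v : S.V) (h : x = S.pred^[j] v) : S.level x = S.level v + j := by
          rw [h, level_iterate_pred]
        split_ifs with hx
        · rw [tsum_eq_single (S.level x - a).toNat, tsum_eq_sum (s := S.desc (S.level x - a).toNat x)]
          · refine Finset.sum_congr rfl fun v hv => ?_
            have hv' := S.level_of_mem_desc hv
            rw [if_pos (S.mem_desc.1 hv).symm, if_pos (by omega)]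
          · intro v hv
            rw [if_neg fun h => hv (S.mem_desc.2 h.symm)]
          · intro j hj
            refine ENNReal.tsum_eq_zero.2 fun v => ?_
            split_ifs with h1 h2
            · have := hlevel j v h1
              omega
            all_goals rfl
        · refine ENNReal.tsum_eq_zero.2 fun j => ENNReal.tsum_eq_zero.2 fun v => ?_
          split_ifs with h1 h2
          · have := hlevel j v h1
            omega
          all_goals rfl

lemma enorm_average_le (hq : q ≠ 0) (j : ℕ) (x : S.V) (g : S.V → ℂ) :
    ‖((q : ℂ) ^ j)⁻¹ * ∑ v ∈ S.desc j x, g v‖ₑ ≤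
      ∑ v ∈ S.desc j x, ((q : ℝ≥0∞) ^ j)⁻¹ * ‖g v‖ₑ := by
  rw [← Finset.mul_sum, enorm_mul, enorm_inv (pow_ne_zero _ (Nat.cast_ne_zero.2 hq)), enorm_pow]
  have : ‖(q : ℂ)‖ₑ = q := by simp [enorm_eq_nnnorm]
  rw [this]
  gcongr
  exact enorm_sum_le _ _

lemma sum_desc_const (hq : q ≠ 0) (j : ℕ) (x : S.V) (c : ℝ≥0∞) :
    ∑ _v ∈ S.desc j x, ((q : ℝ≥0∞) ^ j)⁻¹ * c = c := by
  rw [Finset.sum_const, card_desc, nsmul_eq_mul, Nat.cast_pow, ← mul_assoc,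
    ENNReal.mul_inv_cancel (pow_ne_zero _ (Nat.cast_ne_zero.2 hq))
      (ENNReal.pow_ne_top (ENNReal.natCast_ne_top q)), one_mul]

lemma enorm_average_rpow_le (hq : q ≠ 0) {r : ℝ} (hr : 1 ≤ r) (j : ℕ) (x : S.V) (g : S.V → ℂ) :
    (q : ℝ≥0∞) ^ j * ‖((q : ℂ) ^ j)⁻¹ * ∑ v ∈ S.desc j x, g v‖ₑ ^ r ≤
      ∑ v ∈ S.desc j x, ‖g v‖ₑ ^ r := by
  calc (q : ℝ≥0∞) ^ j * ‖((q : ℂ) ^ j)⁻¹ * ∑ v ∈ S.desc j x, g v‖ₑ ^ r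
      ≤ (q : ℝ≥0∞) ^ j * (∑ v ∈ S.desc j x, ((q : ℝ≥0∞) ^ j)⁻¹ * ‖g v‖ₑ) ^ r := by
        gcongr
        exact S.enorm_average_le hq j x g
    _ ≤ (q : ℝ≥0∞) ^ j * ∑ v ∈ S.desc j x, ((q : ℝ≥0∞) ^ j)⁻¹ * ‖g v‖ₑ ^ r := by
        gcongr
        refine ENNReal.rpow_arith_mean_le_arith_mean_rpow _ _ _ ?_ hr
        simpa using S.sum_desc_const hq j x 1
    _ = _ := by
        rw [← Finset.mul_sum, ← mul_assoc,
          ENNReal.mul_inv_cancel (pow_ne_zero _ (Nat.cast_ne_zero.2 hq))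
            (ENNReal.pow_ne_top (ENNReal.natCast_ne_top q)), one_mul]

lemma tsum_enorm_ray_rpow (f : S.V → ℂ) (v : S.V) {r : ℝ} (hr : 0 < r) :
    ∑' n : ℤ, ‖S.ray f v n‖ₑ ^ r = ∑' j : ℕ, ‖f (S.pred^[j] v)‖ₑ ^ r := by
  simp only [← ray_natCast]
  refine (Function.Injective.tsum_eq Nat.cast_injective fun n hn => ?_).symm
  by_contra hn'
  refine hn ?_
  have : ¬ 0 ≤ n := fun h => hn' ⟨n.toNat, Int.toNat_of_nonneg h⟩
  simp [ray, this, hr]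

lemma exists_le_level {s : Set S.V} (hs : s.Finite) : ∃ a, ∀ x ∈ s, a ≤ S.level x := by
  obtain ⟨a, ha⟩ := (hs.image S.level).bddBelow
  exact ⟨a, fun x hx => ha ⟨x, hx, rfl⟩⟩

/-- Transference above level `a` for finite exponents. -/
lemma tsum_transference_le (hq : q ≠ 0) {r : ℝ} (hr : 1 ≤ r) {k : ℤ → ℂ} {C : ℝ≥0∞}
    (hk : ∀ F : ℤ → ℂ, (Function.support F).Finite →
      ∑' n : ℤ, ‖∑' m : ℤ, F m * k (n - m)‖ₑ ^ r ≤ C * ∑' n : ℤ, ‖F n‖ₑ ^ r)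
    {f : S.V → ℂ} (hf : (Function.support f).Finite) {a : ℤ}
    (ha : ∀ x, f x ≠ 0 → a ≤ S.level x) :
    ∑' x, (if a ≤ S.level x then ‖∑' n : ℤ, k n * S.sigTilde (-n) f x‖ₑ ^ r * S.w x else 0) ≤
      C * ∑' x, ‖f x‖ₑ ^ r * S.w x := by
  have hr0 : 0 < r := by linarith
  have hlevel {x : S.V} (hx : a ≤ S.level x) : S.level x = a + (S.level x - a).toNat := by omega
  calc _ ≤ ∑' x, (q : ℝ≥0∞) ^ (a : ℝ) * (if a ≤ S.level x then
          ∑ v ∈ S.desc (S.level x - a).toNat x,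
            ‖∑' m : ℤ, S.ray f v m * k ((S.level x - a).toNat - m)‖ₑ ^ r else 0) := by
        refine ENNReal.tsum_le_tsum fun x => ?_
        split_ifs with hx
        · rw [S.tsum_sigTilde_eq_average_convolution hq k hf ha (hlevel hx),
            S.w_eq_mul_pow hq (hlevel hx), mul_left_comm, mul_comm (_ ^ r)]
          gcongr
          exact S.enorm_average_rpow_le hq hr _ _ _
        · exact zero_le
    _ = (q : ℝ≥0∞) ^ (a : ℝ) * ∑' v, (if S.level v = a then
          ∑' j : ℕ, ‖∑' m : ℤ, S.ray f v m * k (j - m)‖ₑ ^ r else 0) := by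
        rw [ENNReal.tsum_mul_left, S.tsum_ray_eq_tsum_desc a
          fun j v => ‖∑' m : ℤ, S.ray f v m * k (j - m)‖ₑ ^ r]
    _ ≤ (q : ℝ≥0∞) ^ (a : ℝ) * ∑' v, C * (if S.level v = a then
          ∑' j : ℕ, ‖f (S.pred^[j] v)‖ₑ ^ r else 0) := by
        gcongr with v
        split_ifs
        · rw [← S.tsum_enorm_ray_rpow f v hr0]
          refine le_trans ?_ (hk _ (S.finite_support_ray hf v))
          exact ENNReal.tsum_comp_le_tsum_of_injective (f := ((↑) : ℕ → ℤ)) Nat.cast_injective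
            fun n : ℤ => ‖∑' m : ℤ, S.ray f v m * k (n - m)‖ₑ ^ r
        · exact zero_le
    _ = C * ∑' x, (q : ℝ≥0∞) ^ (a : ℝ) * (if a ≤ S.level x then
          ∑ v ∈ S.desc (S.level x - a).toNat x,
            ‖f (S.pred^[(S.level x - a).toNat] v)‖ₑ ^ r else 0) := by
        rw [ENNReal.tsum_mul_left, ENNReal.tsum_mul_left,
          S.tsum_ray_eq_tsum_desc a fun j v => ‖f (S.pred^[j] v)‖ₑ ^ r, mul_left_comm]
    _ ≤ _ := by
        refine mul_le_mul' le_rfl (ENNReal.tsum_le_tsum fun x => ?_)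
        split_ifs with hx
        · rw [Finset.sum_congr rfl (g := fun _ => ‖f x‖ₑ ^ r)
            fun v hv => by rw [S.mem_desc.1 hv], Finset.sum_const, card_desc, nsmul_eq_mul,
            S.w_eq_mul_pow hq (hlevel hx), Nat.cast_pow, ← mul_assoc, mul_comm]
        · simp

end FlowTree

open ZRiesz in
/-- transference: if `k ∈ Cv^p(ℤ)` then `𝒦 = Σ_{n∈ℤ} k(n) Σ̃_{−n}` is bounded
on `L^p(μ)` with norm at most `‖k‖_{Cv^p}` (i.e. any convolutor bound `C` for `k` on
`ℓ^p(ℤ)` is a bound for `𝒦` on `L^p(μ)`). -/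
theorem transference_convolutor {q : ℕ} (hq : 2 ≤ q) (S : FlowTree q)
    (p : ℝ≥0∞) (hp : 1 ≤ p) (k : ℤ → ℂ) (C : ℝ≥0∞)
    (hk : ∀ F : ℤ → ℂ, (Function.support F).Finite →
      zlpNorm p (fun n => ∑' m : ℤ, F m * k (n - m)) ≤ C * zlpNorm p F) :
    ∀ f : S.V → ℂ, (Function.support f).Finite →
      S.lpNorm p (fun x => ∑' n : ℤ, k n * S.sigTilde (-n) f x) ≤ C * S.lpNorm p f := by
  have hq0 : q ≠ 0 := by omega
  intro f hf
  have hsupp {s : Set S.V} (hs : s.Finite) :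
      ∃ a, (∀ x ∈ s, a ≤ S.level x) ∧ ∀ x, f x ≠ 0 → a ≤ S.level x := by
    obtain ⟨a, ha⟩ := S.exists_le_level (hs.union hf)
    exact ⟨a, fun x hx => ha x (.inl hx), fun x hx => ha x (.inr hx)⟩
  simp only [FlowTree.lpNorm, zlpNorm, ← enorm_eq_nnnorm] at hk ⊢
  by_cases hp_top : p = ∞
  · simp only [if_pos hp_top] at hk ⊢
    refine iSup_le fun x => ?_
    obtain ⟨a, hax, ha⟩ := hsupp (Set.finite_singleton x)
    have hx : S.level x = a + (S.level x - a).toNat := by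
      have := hax x rfl
      omega
    rw [S.tsum_sigTilde_eq_average_convolution hq0 k hf ha hx]
    refine (S.enorm_average_le hq0 _ _ _).trans
      (le_trans ?_ (S.sum_desc_const hq0 (S.level x - a).toNat x _).le)
    gcongr with v
    refine (le_iSup (fun n : ℤ => ‖∑' m : ℤ, S.ray f v m * k (n - m)‖ₑ) _).trans
      ((hk _ (S.finite_support_ray hf v)).trans ?_)
    gcongr
    refine iSup_le fun n => ?_
    rw [FlowTree.ray]
    split_ifs
    · exact le_iSup (fun y => ‖f y‖ₑ) _
    · simp
  · simp only [if_neg hp_top] at hk ⊢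
    have hr : 1 ≤ p.toReal := by
      simpa using ENNReal.toReal_mono hp_top hp
    have hr0 : 0 < p.toReal := by linarith
    have hpow (A B : ℝ≥0∞) : A ^ (1 / p.toReal) ≤ C * B ^ (1 / p.toReal) ↔
        A ≤ C ^ p.toReal * B := by
      rw [one_div, ENNReal.rpow_inv_le_iff hr0, ENNReal.mul_rpow_of_nonneg _ _ hr0.le,
        ENNReal.rpow_inv_rpow hr0.ne']
    simp only [hpow] at hk ⊢
    rw [ENNReal.tsum_eq_iSup_sum]
    refine iSup_le fun s => ?_
    obtain ⟨a, has, ha⟩ := hsupp s.finite_toSet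
    refine le_trans ?_ (S.tsum_transference_le hq0 hr hk hf ha)
    refine le_trans (Finset.sum_le_sum fun x hx => ?_) (ENNReal.sum_le_tsum s)
    rw [if_pos (has x hx)]
end
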